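/- Let P and Q be TRAPs and φ : P → Q a family of maps compatible with the S×S^op actions (φ(σ·x·τ) = σ·φ(x)·τ) and with the horizontal concatenation and unit, and satisfying t_{1,1} ∘ φ(x) = φ ∘ t_{1,1}(x) for all x ∈ P(k,l) with k,l ≥ 1. Then φ commutes with every partial trace map: φ ∘ t_{i,j} = t_{i,j} ∘ φ for all admissible i,j, so φ is a morphism of TRAPs. -/

import Mathlib

open Equiv

/-- The block sum `σ ⊗ τ ∈ S_{m+n}` of two permutations. -/
def osum {m n : ℕ} (σ : Equiv.Perm (Fin m)) (τ : Equiv.Perm (Fin n)) :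
    Equiv.Perm (Fin (m + n)) :=
  finSumFinEquiv.symm.trans ((Equiv.sumCongr σ τ).trans finSumFinEquiv)

/-- The block-swap permutation `c_{m,n} ∈ S_{m+n}` (`i ↦ i+n` if `i < m`, `i ↦ i−m`
otherwise, 0-indexed). -/
def cPerm (m n : ℕ) : Equiv.Perm (Fin (m + n)) :=
  finSumFinEquiv.symm.trans ((Equiv.sumComm (Fin m) (Fin n)).trans
    (finSumFinEquiv.trans (finCongr (Nat.add_comm n m))))

/-- The permutation `σ_p ∈ S_n` obtained from `σ ∈ S_{n+1}` by deleting the letter `p`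
from the word of `σ` and shifting all larger letters down by one. -/
def delPerm {n : ℕ} (σ : Equiv.Perm (Fin (n + 1))) (p : Fin (n + 1)) :
    Equiv.Perm (Fin n) :=
  Equiv.removeNone ((finSuccEquiv' (σ⁻¹ p)).symm.trans (σ.trans (finSuccEquiv' p)))

/-- A family `P(k,l)` of `S_l × S_k^{op}`-modules equipped with an associative, unital,
equivariant, commutative horizontal concatenation `*` and partial trace maps `t_{i,j}`
satisfying the commutation axiom 3(a) and the equivariance axiom 3(b) of TRAPs
(everything in the definition of a TRAP except the compatibility axiom 3(c) of the
partial traces with the horizontal concatenation). -/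
structure PreTRAP where
  P : ℕ → ℕ → Type
  /-- left action of `S_l` on `P(k,l)` -/
  actL : ∀ {k l : ℕ}, Equiv.Perm (Fin l) → P k l → P k l
  /-- right action of `S_k` on `P(k,l)` -/
  actR : ∀ {k l : ℕ}, P k l → Equiv.Perm (Fin k) → P k l
  actL_one : ∀ {k l : ℕ} (p : P k l), actL 1 p = p
  actR_one : ∀ {k l : ℕ} (p : P k l), actR p 1 = p
  actL_mul : ∀ {k l : ℕ} (σ σ' : Equiv.Perm (Fin l)) (p : P k l),
    actL σ (actL σ' p) = actL (σ * σ') p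
  actLR : ∀ {k l : ℕ} (σ : Equiv.Perm (Fin l)) (τ : Equiv.Perm (Fin k)) (p : P k l),
    actL σ (actR p τ) = actR (actL σ p) τ
  actR_mul : ∀ {k l : ℕ} (τ τ' : Equiv.Perm (Fin k)) (p : P k l),
    actR (actR p τ) τ' = actR p (τ * τ')
  /-- the horizontal concatenation -/
  hmul : ∀ {k l k' l' : ℕ}, P k l → P k' l' → P (k + k') (l + l')
  /-- the unit of the horizontal concatenation -/
  I0 : P 0 0
  hmul_assoc : ∀ {k l k' l' k'' l'' : ℕ} (p : P k l) (p' : P k' l') (p'' : P k'' l''),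
    HEq (hmul (hmul p p') p'') (hmul p (hmul p' p''))
  I0_hmul : ∀ {k l : ℕ} (p : P k l), HEq (hmul I0 p) p
  hmul_I0 : ∀ {k l : ℕ} (p : P k l), hmul p I0 = p
  hmul_equivariant : ∀ {k l k' l' : ℕ} (p : P k l) (p' : P k' l')
    (σ : Equiv.Perm (Fin l)) (τ : Equiv.Perm (Fin k))
    (σ' : Equiv.Perm (Fin l')) (τ' : Equiv.Perm (Fin k')),
    hmul (actL σ (actR p τ)) (actL σ' (actR p' τ'))
      = actL (osum σ σ') (actR (hmul p p') (osum τ τ'))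
  hmul_comm : ∀ {k l k' l' : ℕ} (p : P k l) (p' : P k' l'),
    HEq (actL (cPerm l l') (hmul p p'))
      (actR (hmul p' p) ((finCongr (Nat.add_comm k k')).permCongr (cPerm k k')))
  /-- the partial trace maps `t_{i,j} : P(k+1, l+1) → P(k,l)` (0-indexed) -/
  tr : ∀ {k l : ℕ}, Fin (k + 1) → Fin (l + 1) → P (k + 1) (l + 1) → P k l
  tr_tr₁ : ∀ {k l : ℕ} (p : P (k + 2) (l + 2)) (i : Fin (k + 2)) (j : Fin (l + 2))
    (i' : Fin (k + 1)) (j' : Fin (l + 1))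
    (hi : (i' : ℕ) < (i : ℕ)) (hj : (j' : ℕ) < (j : ℕ)),
    tr i' j' (tr i j p)
      = tr ⟨(i : ℕ) - 1, by have := i.isLt; omega⟩ ⟨(j : ℕ) - 1, by have := j.isLt; omega⟩
          (tr i'.castSucc j'.castSucc p)
  tr_tr₂ : ∀ {k l : ℕ} (p : P (k + 2) (l + 2)) (i : Fin (k + 2)) (j : Fin (l + 2))
    (i' : Fin (k + 1)) (j' : Fin (l + 1))
    (hi : (i : ℕ) ≤ (i' : ℕ)) (hj : (j' : ℕ) < (j : ℕ)),
    tr i' j' (tr i j p)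
      = tr ⟨(i : ℕ), by have := i'.isLt; omega⟩ ⟨(j : ℕ) - 1, by have := j.isLt; omega⟩
          (tr i'.succ j'.castSucc p)
  tr_tr₃ : ∀ {k l : ℕ} (p : P (k + 2) (l + 2)) (i : Fin (k + 2)) (j : Fin (l + 2))
    (i' : Fin (k + 1)) (j' : Fin (l + 1))
    (hi : (i' : ℕ) < (i : ℕ)) (hj : (j : ℕ) ≤ (j' : ℕ)),
    tr i' j' (tr i j p)
      = tr ⟨(i : ℕ) - 1, by have := i.isLt; omega⟩ ⟨(j : ℕ), by have := j'.isLt; omega⟩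
          (tr i'.castSucc j'.succ p)
  tr_tr₄ : ∀ {k l : ℕ} (p : P (k + 2) (l + 2)) (i : Fin (k + 2)) (j : Fin (l + 2))
    (i' : Fin (k + 1)) (j' : Fin (l + 1))
    (hi : (i : ℕ) ≤ (i' : ℕ)) (hj : (j : ℕ) ≤ (j' : ℕ)),
    tr i' j' (tr i j p)
      = tr ⟨(i : ℕ), by have := i'.isLt; omega⟩ ⟨(j : ℕ), by have := j'.isLt; omega⟩
          (tr i'.succ j'.succ p)
  tr_equivariant : ∀ {k l : ℕ} (p : P (k + 1) (l + 1))
    (σ : Equiv.Perm (Fin (l + 1))) (τ : Equiv.Perm (Fin (k + 1)))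
    (i : Fin (k + 1)) (j : Fin (l + 1)),
    tr i j (actL σ (actR p τ))
      = actL (delPerm σ j) (actR (tr (τ i) (σ⁻¹ j) p) (delPerm τ i))

/-- A TRAP: a `PreTRAP` whose partial trace maps are moreover compatible with the
horizontal concatenation (Axiom 3(c)):  `t_{i,j}(p * p') = t_{i,j}(p) * p'` for
`i ≤ k`, `j ≤ l`, and `t_{i,j}(p * p') = p * t_{i−k,j−l}(p')` for `i > k`, `j > l`. -/
structure TRAP extends PreTRAP where
  tr_hmul_left : ∀ {k l k' l' : ℕ} (p : P (k + 1) (l + 1)) (p' : P (k' + 1) (l' + 1))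
    (i : Fin (k + 1)) (j : Fin (l + 1)),
    cast (congrArg₂ P (show (k + 1) + k' = k + (k' + 1) by omega)
        (show (l + 1) + l' = l + (l' + 1) by omega))
      (tr (⟨(i : ℕ), by have := i.isLt; omega⟩ : Fin ((k + 1) + k' + 1))
        (⟨(j : ℕ), by have := j.isLt; omega⟩ : Fin ((l + 1) + l' + 1))
        (hmul p p' : P ((k + 1) + (k' + 1)) ((l + 1) + (l' + 1))))
      = hmul (tr i j p) p'
  tr_hmul_right : ∀ {k l k' l' : ℕ} (p : P (k + 1) (l + 1)) (p' : P (k' + 1) (l' + 1))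
    (i' : Fin (k' + 1)) (j' : Fin (l' + 1)),
    tr (⟨(k + 1) + (i' : ℕ), by have := i'.isLt; omega⟩ : Fin ((k + 1) + k' + 1))
        (⟨(l + 1) + (j' : ℕ), by have := j'.isLt; omega⟩ : Fin ((l + 1) + l' + 1))
        (hmul p p' : P ((k + 1) + (k' + 1)) ((l + 1) + (l' + 1)))
      = hmul p (tr i' j' p')

/-- Let `P` and `Q` be TRAPs and `φ : P → Q` a family of maps compatible with the
`S × S^{op}`-actions, with the horizontal concatenation and its unit, and satisfying
`t_{1,1} ∘ φ = φ ∘ t_{1,1}`.  Then `φ` commutes with every partial trace map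
`t_{i,j}`, so `φ` is a morphism of TRAPs. -/
theorem morphism_of_t11 (T U : TRAP) (φ : ∀ {k l : ℕ}, T.P k l → U.P k l)
    (hact : ∀ {k l : ℕ} (σ : Equiv.Perm (Fin l)) (τ : Equiv.Perm (Fin k)) (x : T.P k l),
      φ (T.actL σ (T.actR x τ)) = U.actL σ (U.actR (φ x) τ))
    (hI0 : φ T.I0 = U.I0)
    (hconcat : ∀ {k l k' l' : ℕ} (x : T.P k l) (y : T.P k' l'),
      φ (T.hmul x y) = U.hmul (φ x) (φ y))
    (h11 : ∀ {k l : ℕ} (x : T.P (k + 1) (l + 1)),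
      φ (T.tr 0 0 x) = U.tr 0 0 (φ x)) :
    ∀ {k l : ℕ} (i : Fin (k + 1)) (j : Fin (l + 1)) (x : T.P (k + 1) (l + 1)),
      φ (T.tr i j x) = U.tr i j (φ x) := by
  intro k l i j x
  have key : ∀ (V : TRAP) (y : V.P (k + 1) (l + 1)),
      V.tr i j y = V.actL (delPerm (Equiv.swap 0 j) 0)⁻¹
        (V.actR (V.tr 0 0 (V.actL (Equiv.swap 0 j) (V.actR y (Equiv.swap 0 i))))
          (delPerm (Equiv.swap 0 i) 0)⁻¹) := by
    intro V y
    rw [V.tr_equivariant, Equiv.swap_inv, Equiv.swap_apply_left, Equiv.swap_apply_left,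
      V.actLR, V.actL_mul, inv_mul_cancel, V.actL_one, V.actR_mul, mul_inv_cancel, V.actR_one]
  rw [key T x, key U (φ x), hact, h11, hact]
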